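/- arXiv:1406.6041 — 3 statements merged into one kernel-verified Lean document; each statement's English description precedes it below -/
import Mathlib

section
/- If α and β are distinct simple roots, then 2α+β and α+2β cannot both be roots. -/
open scoped RealInnerProductSpace

/-- The Cartan pairing `⟨α^∨, x⟩ = 2(α,x)/(α,α)`. -/
noncomputable def cpair {V : Type*} [NormedAddCommGroup V] [InnerProductSpace ℝ V]
    (α x : V) : ℝ :=
  2 * ⟪α, x⟫ / ⟪α, α⟫

/-- A finite reduced crystallographic root system `Φ` in `V`, together with a fixed base `S`
(the set of simple roots): every root is a nonnegative or nonpositive integer combination of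
simple roots. -/
structure BasedRootSystem (V : Type*) [NormedAddCommGroup V] [InnerProductSpace ℝ V] where
  Φ : Set V
  S : Set V
  finite : Φ.Finite
  ne_zero : ∀ α ∈ Φ, α ≠ 0
  neg_mem : ∀ α ∈ Φ, -α ∈ Φ
  reflect_mem : ∀ α ∈ Φ, ∀ β ∈ Φ, β - cpair α β • α ∈ Φ
  pairing_int : ∀ α ∈ Φ, ∀ β ∈ Φ, ∃ n : ℤ, cpair α β = n
  reduced : ∀ α ∈ Φ, ∀ t : ℝ, t • α ∈ Φ → t = 1 ∨ t = -1
  base_subset : S ⊆ Φ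
  base_indep : LinearIndependent ℝ ((↑) : S → V)
  pos_or_neg : ∀ β ∈ Φ,
      (∃ (t : Finset V) (c : V → ℕ), ↑t ⊆ S ∧ β = ∑ s ∈ t, (c s : ℝ) • s) ∨
      (∃ (t : Finset V) (c : V → ℕ), ↑t ⊆ S ∧ -β = ∑ s ∈ t, (c s : ℝ) • s)

/-- `β` is a positive root: a root which is a nonnegative integer combination of the
simple roots. -/
def BasedRootSystem.IsPositiveRoot {V : Type*} [NormedAddCommGroup V] [InnerProductSpace ℝ V]
    (R : BasedRootSystem V) (β : V) : Prop :=
  β ∈ R.Φ ∧ ∃ (t : Finset V) (c : V → ℕ), ↑t ⊆ R.S ∧ β = ∑ s ∈ t, (c s : ℝ) • s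

namespace BasedRootSystem

variable {V : Type*} [NormedAddCommGroup V] [InnerProductSpace ℝ V] (R : BasedRootSystem V)

/-- The coordinate functional of a simple root. -/
theorem exists_coord {α : V} (hα : α ∈ R.S) :
    ∃ f : V →ₗ[ℝ] ℝ, f α = 1 ∧ ∀ s ∈ R.S, s ≠ α → f s = 0 := by
  have hli : LinearIndepOn ℝ id R.S := R.base_indep
  let b := Module.Basis.extend hli
  have hsub : R.S ⊆ hli.extend (Set.subset_univ _) := hli.subset_extend _
  have hb : ∀ s (hs : s ∈ R.S), b ⟨s, hsub hs⟩ = s := fun s hs => by simp [b]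
  refine ⟨b.coord ⟨α, hsub hα⟩, ?_, fun s hs hne => ?_⟩
  · have := b.repr_self ⟨α, hsub hα⟩
    rw [hb α hα] at this
    simp [this]
  · rw [← hb s hs]
    simp [hne]

/-- Functionals that are nonnegative on the base cannot take opposite signs at a root. -/
theorem nonneg_of_pos {f g : V →ₗ[ℝ] ℝ} (hf : ∀ s ∈ R.S, 0 ≤ f s) (hg : ∀ s ∈ R.S, 0 ≤ g s)
    {γ : V} (hγ : γ ∈ R.Φ) (hpos : 0 < g γ) : 0 ≤ f γ := by
  have key : ∀ h : V →ₗ[ℝ] ℝ, (∀ s ∈ R.S, 0 ≤ h s) → ∀ (t : Finset V) (c : V → ℕ), ↑t ⊆ R.S →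
      0 ≤ h (∑ s ∈ t, (c s : ℝ) • s) := fun h hh t c ht => by
    simp only [map_sum, map_smul, smul_eq_mul]
    exact Finset.sum_nonneg fun s hs => mul_nonneg (Nat.cast_nonneg _) (hh s (ht hs))
  rcases R.pos_or_neg γ hγ with ⟨t, c, ht, h⟩ | ⟨t, c, ht, h⟩
  · exact h ▸ key f hf t c ht
  · have := key g hg t c ht
    rw [← h, map_neg] at this
    linarith

theorem inner_self_pos {α : V} (hα : α ∈ R.Φ) : 0 < ⟪α, α⟫ :=
  real_inner_self_pos.2 (R.ne_zero α hα)

/-- Reflecting `2α + β` in `α` gives `β - (2 + ⟨α^∨, β⟩)α`, whose `α`-coordinate is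
nonnegative. -/
theorem cpair_le_neg_two {α β : V} (hα : α ∈ R.S) (hβ : β ∈ R.S) (hne : α ≠ β)
    (h : (2 : ℝ) • α + β ∈ R.Φ) : cpair α β ≤ -2 := by
  have hnonneg : ∀ {δ : V} {f : V →ₗ[ℝ] ℝ}, f δ = 1 → (∀ s ∈ R.S, s ≠ δ → f s = 0) →
      ∀ s ∈ R.S, 0 ≤ f s := fun {δ f} h1 h0 s hs => by
    rcases eq_or_ne s δ with rfl | hs'
    · simp [h1]
    · simp [h0 s hs hs']
  obtain ⟨f, hf1, hf0⟩ := R.exists_coord hα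
  obtain ⟨g, hg1, hg0⟩ := R.exists_coord hβ
  have hpos := R.inner_self_pos (R.base_subset hα)
  have hpair : cpair α ((2 : ℝ) • α + β) = 4 + cpair α β := by
    unfold cpair
    rw [inner_add_right, real_inner_smul_right]
    field_simp
    ring
  have hrefl := R.reflect_mem α (R.base_subset hα) _ h
  have := R.nonneg_of_pos (hnonneg hf1 hf0) (hnonneg hg1 hg0) hrefl
    (by simp [hg1, hg0 α hα hne])
  simp only [map_sub, map_add, map_smul, smul_eq_mul, hf1, hf0 β hβ hne.symm, hpair] at this
  linarith

/-- Strict Cauchy–Schwarz for a pair of distinct simple roots. -/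
theorem cpair_mul_cpair_lt_four {α β : V} (hα : α ∈ R.S) (hβ : β ∈ R.S) (hne : α ≠ β) :
    cpair α β * cpair β α < 4 := by
  have ha := R.inner_self_pos (R.base_subset hα)
  have hb := R.inner_self_pos (R.base_subset hβ)
  obtain ⟨g, hg1, hg0⟩ := R.exists_coord hβ
  have hv : ⟪α, α⟫ • β - ⟪α, β⟫ • α ≠ 0 := fun h => by
    have := congrArg g h
    simp only [map_sub, map_smul, smul_eq_mul, hg1, hg0 α hα hne, map_zero] at this
    linarith
  have hlt := real_inner_self_pos.2 hv
  simp only [inner_sub_left, inner_sub_right, real_inner_smul_left, real_inner_smul_right,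
    real_inner_comm α β] at hlt
  have hcs : ⟪α, β⟫ * ⟪α, β⟫ < ⟪α, α⟫ * ⟪β, β⟫ := by
    refine lt_of_mul_lt_mul_left ?_ ha.le
    linarith
  unfold cpair
  rw [real_inner_comm α β, div_mul_div_comm, div_lt_iff₀ (mul_pos ha hb)]
  linarith

end BasedRootSystem

/-- If `α` and `β` are distinct simple roots, then `2α + β` and `α + 2β`
cannot both be roots. -/
theorem not_both_two_smul_add {V : Type*} [NormedAddCommGroup V] [InnerProductSpace ℝ V]
    [FiniteDimensional ℝ V] (R : BasedRootSystem V) (α β : V)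
    (hα : α ∈ R.S) (hβ : β ∈ R.S) (hne : α ≠ β) :
    ¬ ((2 : ℝ) • α + β ∈ R.Φ ∧ α + (2 : ℝ) • β ∈ R.Φ) := by
  rintro ⟨h₁, h₂⟩
  have hα₂ := R.cpair_le_neg_two hα hβ hne h₁
  have hβ₂ := R.cpair_le_neg_two hβ hα hne.symm (add_comm α _ ▸ h₂)
  have := R.cpair_mul_cpair_lt_four hα hβ hne
  nlinarith
end

section
/- If α1 and α2 are orthogonal simple roots (i.e. ⟨α1^∨, α2⟩ = 0) and γ is a root such that both γ−α1 and γ−α2 are roots, then γ−α1−α2 is also a root. -/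
open scoped RealInnerProductSpace

/-- A linearly independent set admits, for each of its members `a`, a linear functional that
is `1` at `a` and `0` at the other members. -/
lemma LinearIndependent.exists_dual_eq_ite {K V : Type*} [Field K] [AddCommGroup V] [Module K V]
    {S : Set V} (hS : LinearIndependent K ((↑) : S → V)) {a : V} (ha : a ∈ S) :
    ∃ f : V →ₗ[K] K, f a = 1 ∧ ∀ s ∈ S, s ≠ a → f s = 0 := by
  have hS' : LinearIndepOn K id S := hS
  have hsub : S ⊆ hS'.extend (Set.subset_univ S) :=
    hS'.subset_extend _
  let B := Module.Basis.extend hS'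
  have hB (s : V) (hs : s ∈ S) : B ⟨s, hsub hs⟩ = s := Module.Basis.extend_apply_self _ _
  refine ⟨B.coord ⟨a, hsub ha⟩, ?_, fun s hs hsa ↦ ?_⟩
  · have h : B.coord ⟨a, hsub ha⟩ (B ⟨a, hsub ha⟩) = 1 := by simp
    rwa [hB a ha] at h
  · rw [← hB s hs]
    simp [hsa]

lemma cpair_mul_inner_self {V : Type*} [NormedAddCommGroup V] [InnerProductSpace ℝ V]
    {x : V} (hx : x ≠ 0) (y : V) : cpair x y * ⟪x, x⟫ = 2 * ⟪x, y⟫ :=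
  div_mul_cancel₀ _ (inner_self_ne_zero.mpr hx)

namespace BasedRootSystem

variable {V : Type*} [NormedAddCommGroup V] [InnerProductSpace ℝ V] (R : BasedRootSystem V)

lemma sub_mem_comm {x y : V} (h : x - y ∈ R.Φ) : y - x ∈ R.Φ := by
  simpa using R.neg_mem _ h

lemma cpair_eq_one_or_two_le {x y : V} (hx : x ∈ R.Φ) (hy : y ∈ R.Φ) (hxy : 0 < ⟪x, y⟫) :
    cpair x y = 1 ∨ 2 ≤ cpair x y := by
  have hpos : 0 < cpair x y :=
    div_pos (by linarith) (real_inner_self_pos.mpr (R.ne_zero x hx))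
  obtain ⟨n, hn⟩ := R.pairing_int x hx y hy
  rw [hn] at hpos ⊢
  norm_cast at hpos ⊢
  omega

/-- The difference of two distinct roots at an acute angle is a root. -/
lemma sub_mem_of_inner_pos {x y : V} (hx : x ∈ R.Φ) (hy : y ∈ R.Φ) (hne : x ≠ y)
    (hxy : 0 < ⟪x, y⟫) : x - y ∈ R.Φ := by
  have hyx : 0 < ⟪y, x⟫ := by rwa [real_inner_comm]
  rcases R.cpair_eq_one_or_two_le hx hy hxy with h | h
  · exact R.sub_mem_comm (by simpa [h] using R.reflect_mem x hx y hy)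
  rcases R.cpair_eq_one_or_two_le hy hx hyx with h' | h'
  · simpa [h'] using R.reflect_mem y hy x hx
  have hxx : 0 < ⟪x, x⟫ := real_inner_self_pos.mpr (R.ne_zero x hx)
  have hyy : 0 < ⟪y, y⟫ := real_inner_self_pos.mpr (R.ne_zero y hy)
  have hd : 0 < ⟪x - y, x - y⟫ := real_inner_self_pos.mpr (sub_ne_zero.mpr hne)
  rw [real_inner_sub_sub_self] at hd
  have e := cpair_mul_inner_self (R.ne_zero x hx) y
  have e' := cpair_mul_inner_self (R.ne_zero y hy) x
  rw [real_inner_comm x y] at e'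
  nlinarith

lemma simple_sub_simple_ne_sum {a b : V} (ha : a ∈ R.S) (hb : b ∈ R.S) (hab : a ≠ b)
    (t : Finset V) (c : V → ℕ) (ht : ↑t ⊆ R.S) : b - a ≠ ∑ s ∈ t, (c s : ℝ) • s := by
  intro h
  obtain ⟨f, hfa, hf⟩ := R.base_indep.exists_dual_eq_ite ha
  have hsum : 0 ≤ f (∑ s ∈ t, (c s : ℝ) • s) := by
    rw [map_sum]
    refine Finset.sum_nonneg fun s hs ↦ ?_
    rw [map_smul, smul_eq_mul]
    refine mul_nonneg (Nat.cast_nonneg _) ?_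
    by_cases hsa : s = a
    · simp [hsa, hfa]
    · exact (hf s (ht hs) hsa).ge
  rw [← h, map_sub, hfa, hf b hb hab.symm] at hsum
  linarith

/-- The difference of two distinct simple roots is not a root. -/
lemma simple_sub_simple_notMem {a b : V} (ha : a ∈ R.S) (hb : b ∈ R.S) (hab : a ≠ b) :
    b - a ∉ R.Φ := by
  intro h
  rcases R.pos_or_neg _ h with ⟨t, c, ht, e⟩ | ⟨t, c, ht, e⟩
  · exact R.simple_sub_simple_ne_sum ha hb hab t c ht e
  · exact R.simple_sub_simple_ne_sum hb ha hab.symm t c ht (by rw [← e, neg_sub])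

/-- The sum of two orthogonal simple roots is not a root. -/
lemma simple_add_simple_notMem {a b : V} (ha : a ∈ R.S) (hb : b ∈ R.S) (hab : a ≠ b)
    (horth : ⟪a, b⟫ = 0) : a + b ∉ R.Φ := by
  intro h
  have ha0 : ⟪a, a⟫ ≠ 0 := inner_self_ne_zero.mpr (R.ne_zero a (R.base_subset ha))
  have hc : cpair a (a + b) = 2 := by
    rw [cpair, inner_add_right, horth, add_zero, mul_div_assoc, div_self ha0, mul_one]
  have hr := R.reflect_mem a (R.base_subset ha) _ h
  rw [hc, show a + b - (2 : ℝ) • a = b - a by module] at hr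
  exact R.simple_sub_simple_notMem ha hb hab hr

end BasedRootSystem

/-- If `α₁` and `α₂` are orthogonal simple roots and `γ` is a root such that
both `γ - α₁` and `γ - α₂` are roots, then `γ - α₁ - α₂` is also a root. -/
theorem sub_two_orthogonal_simples {V : Type*} [NormedAddCommGroup V] [InnerProductSpace ℝ V]
    [FiniteDimensional ℝ V] (R : BasedRootSystem V) (α₁ α₂ γ : V)
    (hα₁ : α₁ ∈ R.S) (hα₂ : α₂ ∈ R.S) (horth : cpair α₁ α₂ = 0) (hγ : γ ∈ R.Φ)
    (h₁ : γ - α₁ ∈ R.Φ) (h₂ : γ - α₂ ∈ R.Φ) :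
    γ - α₁ - α₂ ∈ R.Φ := by
  have ha := R.base_subset hα₁
  have hb := R.base_subset hα₂
  have horth' : ⟪α₁, α₂⟫ = 0 := by
    have := cpair_mul_inner_self (R.ne_zero α₁ ha) α₂
    rw [horth] at this
    linarith
  have hne : α₁ ≠ α₂ := by
    rintro rfl
    exact R.ne_zero α₁ ha (inner_self_eq_zero.mp horth')
  have hsum : γ ≠ α₁ + α₂ := by
    rintro rfl
    exact R.simple_add_simple_notMem hα₁ hα₂ hne horth' hγ
  rcases lt_or_ge 0 ⟪γ, α₁⟫ with hp | hp
  · rw [sub_right_comm]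
    refine R.sub_mem_of_inner_pos h₂ ha (fun h ↦ hsum (sub_eq_iff_eq_add.mp h)) ?_
    rwa [inner_sub_left, real_inner_comm α₁ α₂, horth', sub_zero]
  rcases lt_or_ge 0 ⟪γ, α₂⟫ with hq | hq
  · refine R.sub_mem_of_inner_pos h₁ hb (fun h ↦ hsum ?_) ?_
    · rw [sub_eq_iff_eq_add.mp h, add_comm]
    · rwa [inner_sub_left, horth', sub_zero]
  refine absurd ?_ (R.simple_sub_simple_notMem hα₁ hα₂ hne)
  have hγγ : 0 < ⟪γ, γ⟫ := real_inner_self_pos.mpr (R.ne_zero γ hγ)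
  have hinner : 0 < ⟪γ - α₁, γ - α₂⟫ := by
    rw [inner_sub_left, inner_sub_right, inner_sub_right, horth', real_inner_comm γ α₁]
    linarith
  simpa using R.sub_mem_of_inner_pos h₁ h₂ (fun h ↦ hne (sub_right_injective h)) hinner
end

section
/- Let α be a simple root with α ∈ ℤΓ, and assume: (i) ⟨α^∨, λ⟩ is even for every λ ∈ F; (ii) for every λ ∈ F with λ^#(2α) > 0, the restriction of α^∨ to ℤΓ is a positive rational multiple of λ^#. Then there is a unique λ ∈ F with λ^#(α) > 0, the restriction of α^∨ to ℤΓ equals 2λ^#, and a(α) = {λ^#} has exactly one element. -/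
open scoped RealInnerProductSpace

/-- `lam` is a dominant weight: `⟨β^∨, lam⟩` is a nonnegative integer for every simple
root `β`. -/
def BasedRootSystem.IsDominant {V : Type*} [NormedAddCommGroup V] [InnerProductSpace ℝ V]
    (R : BasedRootSystem V) (lam : V) : Prop :=
  ∀ β ∈ R.S, ∃ n : ℕ, cpair β lam = n

/-- The set `a(α) = {δ ∈ Hom(ℤΓ, ℤ) : δ(α) = 1 and (δ ∈ {λ^#} or α^∨|_{ℤΓ} - δ ∈ {λ^#})}`,
where `lsharp` is the dual basis of `F` and `acheck` is the restriction `α^∨|_{ℤΓ}` of the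
coroot of `α` to `ℤΓ`. -/
def aSet {V : Type*} [NormedAddCommGroup V] [InnerProductSpace ℝ V] (F : Finset V)
    (lsharp : V → (Submodule.span ℤ (F : Set V) →ₗ[ℤ] ℤ))
    (acheck : Submodule.span ℤ (F : Set V) →ₗ[ℤ] ℤ)
    (α : V) (hα : α ∈ Submodule.span ℤ (F : Set V)) :
    Set (Submodule.span ℤ (F : Set V) →ₗ[ℤ] ℤ) :=
  {δ | δ ⟨α, hα⟩ = 1 ∧
    ((∃ lam ∈ F, δ = lsharp lam) ∨ (∃ lam ∈ F, acheck - δ = lsharp lam))}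

/-- Pairing a nonzero vector with its own coroot gives `2`. -/
theorem cpair_self {V : Type*} [NormedAddCommGroup V] [InnerProductSpace ℝ V] {α : V}
    (h : α ≠ 0) : cpair α α = 2 :=
  mul_div_cancel_right₀ 2 (inner_self_ne_zero.mpr h)

/-- Expansion of an integral functional on `ℤΓ` in the dual basis of `F`. -/
theorem apply_eq_sum_dual {V : Type*} [AddCommGroup V] (F : Finset V)
    (lsharp : V → (Submodule.span ℤ (F : Set V) →ₗ[ℤ] ℤ))
    (hlsharp : ∀ lam ∈ F, ∀ mu, ∀ hmu : mu ∈ F,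
      (mu = lam → lsharp lam ⟨mu, Submodule.subset_span (Finset.mem_coe.mpr hmu)⟩ = 1) ∧
      (mu ≠ lam → lsharp lam ⟨mu, Submodule.subset_span (Finset.mem_coe.mpr hmu)⟩ = 0))
    (f : Submodule.span ℤ (F : Set V) →ₗ[ℤ] ℤ) (x : Submodule.span ℤ (F : Set V)) :
    f x = ∑ lam ∈ F.attach, lsharp lam x *
      f ⟨lam, Submodule.subset_span (Finset.mem_coe.mpr lam.2)⟩ := by
  obtain ⟨x, hx⟩ := x
  induction hx using Submodule.span_induction with
  | mem x h =>
    rw [Finset.sum_eq_single ⟨x, h⟩]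
    · simp [(hlsharp x h x h).1 rfl]
    · intro mu _ hne
      rw [(hlsharp mu mu.2 x h).2 fun e => hne (Subtype.ext e.symm), zero_mul]
    · exact fun hn => absurd (Finset.mem_attach _ _) hn
  | zero =>
    change f 0 = ∑ lam ∈ F.attach, lsharp lam 0 * _
    simp
  | add x y hx hy ihx ihy =>
    have e : (⟨x + y, add_mem hx hy⟩ : Submodule.span ℤ (F : Set V)) = ⟨x, hx⟩ + ⟨y, hy⟩ := rfl
    simp only [e, map_add, add_mul, Finset.sum_add_distrib, ← ihx, ← ihy]
  | smul a x hx ih =>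
    have e : (⟨a • x, Submodule.smul_mem _ a hx⟩ : Submodule.span ℤ (F : Set V)) =
      a • ⟨x, hx⟩ := rfl
    simp only [e, map_smul, smul_eq_mul, mul_assoc, ← Finset.mul_sum, ← ih]

/-- Let `α` be a simple root with `α ∈ ℤΓ` such that: (i) `⟨α^∨, λ⟩` is even
for every `λ ∈ F`; (ii) for every `λ ∈ F` with `λ^#(2α) > 0`, the restriction `α^∨|_{ℤΓ}` is a
positive rational multiple of `λ^#`.  Then there is a unique `λ ∈ F` with `λ^#(α) > 0`,
`α^∨|_{ℤΓ} = 2λ^#`, and `a(α) = {λ^#}` has exactly one element. -/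
theorem aSet_singleton {V : Type*} [NormedAddCommGroup V] [InnerProductSpace ℝ V]
    [FiniteDimensional ℝ V] (R : BasedRootSystem V) (F : Finset V)
    (hFdom : ∀ lam ∈ F, R.IsDominant lam)
    (hFindep : LinearIndependent ℝ (Subtype.val : ↥(F : Set V) → V))
    (lsharp : V → (Submodule.span ℤ (F : Set V) →ₗ[ℤ] ℤ))
    (hlsharp : ∀ lam ∈ F, ∀ mu, ∀ hmu : mu ∈ F,
      (mu = lam → lsharp lam ⟨mu, Submodule.subset_span (Finset.mem_coe.mpr hmu)⟩ = 1) ∧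
      (mu ≠ lam → lsharp lam ⟨mu, Submodule.subset_span (Finset.mem_coe.mpr hmu)⟩ = 0))
    (α : V) (hαS : α ∈ R.S) (hα : α ∈ Submodule.span ℤ (F : Set V))
    (acheck : Submodule.span ℤ (F : Set V) →ₗ[ℤ] ℤ)
    (hacheck : ∀ x : Submodule.span ℤ (F : Set V), (acheck x : ℝ) = cpair α x)
    (heven : ∀ lam ∈ F, ∃ n : ℤ, cpair α lam = (2 * n : ℤ))
    (hmult : ∀ lam ∈ F, 0 < lsharp lam ((2 : ℤ) • (⟨α, hα⟩ : Submodule.span ℤ (F : Set V))) →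
      ∃ q : ℚ, 0 < q ∧ ∀ x : Submodule.span ℤ (F : Set V),
        (acheck x : ℚ) = q * (lsharp lam x : ℚ)) :
    ∃ lam ∈ F, 0 < lsharp lam ⟨α, hα⟩ ∧
      (∀ mu ∈ F, 0 < lsharp mu ⟨α, hα⟩ → mu = lam) ∧
      acheck = (2 : ℤ) • lsharp lam ∧
      aSet F lsharp acheck α hα = {lsharp lam} := by
  have htwo : acheck ⟨α, hα⟩ = 2 := by
    have h := hacheck ⟨α, hα⟩
    rw [cpair_self (R.ne_zero α (R.base_subset hαS))] at h
    exact_mod_cast h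
  obtain ⟨lam, hlam, hpos⟩ : ∃ lam ∈ F, 0 < lsharp lam ⟨α, hα⟩ := by
    by_contra! hneg
    have hle : acheck ⟨α, hα⟩ ≤ 0 := by
      rw [apply_eq_sum_dual F lsharp hlsharp acheck]
      refine Finset.sum_nonpos fun mu _ => mul_nonpos_of_nonpos_of_nonneg (hneg mu mu.2) ?_
      obtain ⟨n, hn⟩ := hFdom mu mu.2 α hαS
      have h := hacheck ⟨mu, Submodule.subset_span (Finset.mem_coe.mpr mu.2)⟩
      rw [hn] at h
      have h' : acheck ⟨mu, Submodule.subset_span (Finset.mem_coe.mpr mu.2)⟩ = n := by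
        exact_mod_cast h
      omega
    omega
  have hmult' : ∀ mu ∈ F, 0 < lsharp mu ⟨α, hα⟩ →
      ∃ q : ℚ, 0 < q ∧ ∀ x, (acheck x : ℚ) = q * (lsharp mu x : ℚ) := fun mu hmu h =>
    hmult mu hmu (by rw [map_smul, smul_eq_mul]; omega)
  obtain ⟨q, -, hqx⟩ := hmult' lam hlam hpos
  obtain ⟨n, hn⟩ := heven lam hlam
  have hlam_eq : acheck ⟨lam, Submodule.subset_span (Finset.mem_coe.mpr hlam)⟩ = 2 * n := by
    have h := hacheck ⟨lam, Submodule.subset_span (Finset.mem_coe.mpr hlam)⟩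
    rw [hn] at h
    exact_mod_cast h
  have hq : q = 2 * n := by
    have h := hqx ⟨lam, Submodule.subset_span (Finset.mem_coe.mpr hlam)⟩
    rw [hlam_eq, (hlsharp lam hlam lam hlam).1 rfl] at h
    push_cast at h
    linarith
  have hcheck : ∀ x, acheck x = 2 * n * lsharp lam x := fun x => by
    have h := hqx x
    rw [hq] at h
    exact_mod_cast h
  have hprod : n * lsharp lam ⟨α, hα⟩ = 1 := by
    have h := hcheck ⟨α, hα⟩
    rw [htwo] at h
    linarith
  obtain ⟨rfl, hone⟩ : n = 1 ∧ lsharp lam ⟨α, hα⟩ = 1 := by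
    rcases Int.mul_eq_one_iff_eq_one_or_neg_one.mp hprod with h | h
    · exact h
    · omega
  have hunique : ∀ mu ∈ F, 0 < lsharp mu ⟨α, hα⟩ → mu = lam := by
    intro mu hmu hmupos
    by_contra hne
    obtain ⟨r, -, hr⟩ := hmult' mu hmu hmupos
    have h := hr ⟨lam, Submodule.subset_span (Finset.mem_coe.mpr hlam)⟩
    rw [hlam_eq, (hlsharp mu hmu lam hlam).2 (Ne.symm hne)] at h
    norm_num at h
  have hacheck_eq : acheck = (2 : ℤ) • lsharp lam := by
    ext x
    simpa using hcheck x
  refine ⟨lam, hlam, hpos, hunique, hacheck_eq, Set.ext fun δ => ⟨?_, ?_⟩⟩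
  · rintro ⟨hδ, ⟨mu, hmu, rfl⟩ | ⟨mu, hmu, h⟩⟩
    · rw [hunique mu hmu (by omega), Set.mem_singleton_iff]
    · have hval : lsharp mu ⟨α, hα⟩ = 1 := by
        rw [← h, LinearMap.sub_apply, htwo, hδ]
        norm_num
      rw [hunique mu hmu (by omega), hacheck_eq, two_smul, sub_eq_iff_eq_add] at h
      exact (add_left_cancel h).symm
  · rintro rfl
    exact ⟨hone, Or.inl ⟨lam, hlam, rfl⟩⟩
end
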